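/- Under the stability condition ρ(1 + β₁γ_{1,1}) < 1, the steady-state server availability satisfies P_a = lim_{z→1⁻} (P₀(z) + P̃₁(z) + P̃₂(z)) = [(1 + σ)(1 − ρ(1 + β₁γ_{1,1})) + ρ(1 + σ(1 + β₂γ_{2,1}))] / (1 + σ(1 + β₂γ_{2,1})), where ρ = λμ_{1,1} and σ = αμ_{2,1}. -/

import Mathlib

open MeasureTheory

/-- Laplace transform of a (Borel) measure on `ℝ`. -/
noncomputable def lapl (μ : Measure ℝ) (θ : ℝ) : ℝ :=
  ∫ x, Real.exp (-θ * x) ∂μ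

/-!
Both `hᵢ` and `1 - δᵢ` vanish at `z = 1`, so every quotient in the partial generating functions is
of the form `0 / 0` there and its limit is a quotient of left derivatives. These follow from the
chain rule, since the Laplace transform of a measure on `[0, ∞)` with finite mean `m` has right
derivative `-m` at `0`. In particular the integrand defining `φ` is bounded near `1`, whence
`φ(z) → 1`.
-/

open Filter Set Topology

theorem tendsto_div_of_hasDerivWithinAt_of_eq_zero {𝕜 : Type*} [NontriviallyNormedField 𝕜]
    {f g : 𝕜 → 𝕜} {f' g' a : 𝕜} {s : Set 𝕜} (hf : HasDerivWithinAt f f' s a)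
    (hg : HasDerivWithinAt g g' s a) (hfa : f a = 0) (hga : g a = 0) (hg' : g' ≠ 0) (ha : a ∉ s) :
    Tendsto (fun z => f z / g z) (𝓝[s] a) (𝓝 (f' / g')) := by
  rw [hasDerivWithinAt_iff_tendsto_slope' ha] at hf hg
  refine (hf.div hg hg').congr' ?_
  filter_upwards [self_mem_nhdsWithin] with z hz
  have hza : z - a ≠ 0 := sub_ne_zero.2 (ne_of_mem_of_not_mem hz ha)
  simp only [Pi.div_apply, slope_def_field, hfa, hga, sub_zero, div_div_div_cancel_right₀ hza]

theorem tendsto_intervalIntegral_nhdsLT_zero {E : Type*} [NormedAddCommGroup E] [NormedSpace ℝ E]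
    {f : ℝ → E} {b : ℝ} (hf : IsBoundedUnder (· ≤ ·) (𝓝[<] b) (fun u => ‖f u‖)) :
    Tendsto (fun z => ∫ u in z..b, f u) (𝓝[<] b) (𝓝 0) := by
  obtain ⟨C, hC⟩ := hf
  obtain ⟨a, hab, hbound⟩ := mem_nhdsLT_iff_exists_Ioo_subset.1 (eventually_map.1 hC)
  have hlim : Tendsto (fun z => C * |b - z|) (𝓝[<] b) (𝓝 0) := by
    have hcont : Continuous fun z => C * |b - z| := by fun_prop
    simpa using (hcont.tendsto b).mono_left (nhdsWithin_le_nhds (s := Iio b))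
  refine squeeze_zero_norm' ?_ hlim
  filter_upwards [Ioo_mem_nhdsLT hab] with z hz
  refine intervalIntegral.norm_integral_le_of_norm_le_const_ae ?_
  filter_upwards [Measure.ae_ne volume b] with u hub hu
  rw [uIoc_of_le hz.2.le] at hu
  exact hbound ⟨hz.1.trans hu.1, hu.2.lt_of_ne hub⟩

section Laplace

variable {μ : Measure ℝ}

theorem ae_nonneg_of_measure_Iio_eq_zero (h : μ (Iio 0) = 0) : ∀ᵐ x ∂μ, 0 ≤ x := by
  filter_upwards [measure_eq_zero_iff_ae_notMem.1 h] with x hx using not_lt.1 hx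

theorem integral_id_nonneg_of_measure_Iio_eq_zero (h : μ (Iio 0) = 0) : 0 ≤ ∫ x, x ∂μ :=
  integral_nonneg_of_ae (ae_nonneg_of_measure_Iio_eq_zero h)

theorem lapl_zero [IsProbabilityMeasure μ] : lapl μ 0 = 1 := by
  simp [lapl]

theorem integrable_exp_neg_mul [IsFiniteMeasure μ] (hμ : ∀ᵐ x ∂μ, 0 ≤ x) {θ : ℝ} (hθ : 0 ≤ θ) :
    Integrable (fun x => Real.exp (-θ * x)) μ := by
  refine Integrable.of_bound (by fun_prop) 1 ?_
  filter_upwards [hμ] with x hx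
  rw [Real.norm_eq_abs, Real.abs_exp, Real.exp_le_one_iff, neg_mul, neg_nonpos]
  exact mul_nonneg hθ hx

theorem lapl_le_one [IsProbabilityMeasure μ] (hμ : ∀ᵐ x ∂μ, 0 ≤ x) {θ : ℝ} (hθ : 0 ≤ θ) :
    lapl μ θ ≤ 1 := by
  rw [← lapl_zero (μ := μ)]
  refine integral_mono_ae (integrable_exp_neg_mul hμ hθ) (integrable_exp_neg_mul hμ le_rfl) ?_
  filter_upwards [hμ] with x hx
  gcongr

theorem abs_slope_exp_neg_mul_le {θ x : ℝ} (hθ : 0 < θ) (hx : 0 ≤ x) :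
    |slope (fun t => Real.exp (-t * x)) 0 θ| ≤ x := by
  have hle_one : Real.exp (-θ * x) ≤ 1 :=
    Real.exp_le_one_iff.2 (by simpa using mul_nonneg hθ.le hx)
  have hone_sub_le_exp := Real.add_one_le_exp (-θ * x)
  rw [slope_def_field, abs_div, sub_zero, abs_of_pos hθ, div_le_iff₀ hθ, neg_zero, zero_mul,
    Real.exp_zero, abs_sub_comm, abs_of_nonneg (sub_nonneg.2 hle_one)]
  linarith

theorem hasDerivWithinAt_lapl_zero [IsFiniteMeasure μ] (hμ : ∀ᵐ x ∂μ, 0 ≤ x)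
    (hint : Integrable (fun x => x) μ) :
    HasDerivWithinAt (lapl μ) (-∫ x, x ∂μ) (Ici 0) 0 := by
  rw [← hasDerivWithinAt_Ioi_iff_Ici, hasDerivWithinAt_iff_tendsto_slope' self_notMem_Ioi,
    ← integral_neg]
  have hslope : ∀ x, Tendsto (slope (fun t => Real.exp (-t * x)) 0) (𝓝[>] 0) (𝓝 (-x)) := by
    intro x
    have hderiv : HasDerivAt (fun t : ℝ => Real.exp (-t * x)) (-x) 0 := by
      simpa using ((hasDerivAt_id (0 : ℝ)).neg.mul_const x).exp
    exact (hasDerivWithinAt_iff_tendsto_slope' self_notMem_Ioi).1 hderiv.hasDerivWithinAt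
  have hlim : Tendsto (fun θ => ∫ x, slope (fun t => Real.exp (-t * x)) 0 θ ∂μ) (𝓝[>] 0)
      (𝓝 (∫ x, -x ∂μ)) := by
    refine tendsto_integral_filter_of_dominated_convergence (fun x => x) ?_ ?_ hint
      (Eventually.of_forall hslope)
    · refine Eventually.of_forall fun θ => Continuous.aestronglyMeasurable ?_
      simp only [slope_def_field]
      fun_prop
    · filter_upwards [self_mem_nhdsWithin] with θ hθ
      filter_upwards [hμ] with x hx using abs_slope_exp_neg_mul_le hθ hx
  refine hlim.congr' ?_
  filter_upwards [self_mem_nhdsWithin] with θ hθ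
  simp only [slope_def_field, lapl]
  rw [integral_div, integral_sub (integrable_exp_neg_mul hμ (le_of_lt hθ))
    (integrable_exp_neg_mul hμ le_rfl)]

end Laplace

/-- The function `h` of the paper: when services are interrupted at rate `beta` by repairs with law
`R`, a service of length `x` generates new arrivals, up to its completion, with probability
generating function `z ↦ exp (-h z * x)`. -/
noncomputable def arrivalExponent (lam beta : ℝ) (R : Measure ℝ) (z : ℝ) : ℝ :=
  lam + beta - lam * z - beta * lapl R (lam - lam * z)

/-- The function `δ` of the paper: the probability generating function of the number of arrivals
from the start of a service with law `S` to its completion, repairs included. -/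
noncomputable def arrivalPGF (lam beta : ℝ) (S R : Measure ℝ) (z : ℝ) : ℝ :=
  lapl S (arrivalExponent lam beta R z)

section Arrivals

variable {lam beta : ℝ} {S R : Measure ℝ}

theorem arrivalExponent_one [IsProbabilityMeasure R] : arrivalExponent lam beta R 1 = 0 := by
  simp [arrivalExponent, lapl_zero]

theorem arrivalPGF_one [IsProbabilityMeasure S] [IsProbabilityMeasure R] :
    arrivalPGF lam beta S R 1 = 1 := by
  rw [arrivalPGF, arrivalExponent_one, lapl_zero]

theorem arrivalExponent_nonneg [IsProbabilityMeasure R] (hR : ∀ᵐ x ∂ R, 0 ≤ x) (hlam : 0 ≤ lam)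
    (hbeta : 0 ≤ beta) {z : ℝ} (hz : z ≤ 1) : 0 ≤ arrivalExponent lam beta R z := by
  have harg : 0 ≤ lam - lam * z := sub_nonneg.2 (mul_le_of_le_one_right hlam hz)
  have hrepair := mul_le_of_le_one_right hbeta (lapl_le_one hR harg)
  rw [arrivalExponent]
  linarith

theorem hasDerivWithinAt_arrivalExponent [IsFiniteMeasure R] (hR : ∀ᵐ x ∂ R, 0 ≤ x)
    (hiR : Integrable (fun x => x) R) (hlam : 0 ≤ lam) :
    HasDerivWithinAt (arrivalExponent lam beta R) (-(lam * (1 + beta * ∫ x, x ∂ R))) (Iio 1) 1 := by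
  have harg : HasDerivWithinAt (fun z => lam - lam * z) (-lam) (Iio 1) 1 := by
    simpa using ((hasDerivWithinAt_id (1 : ℝ) (Iio 1)).const_mul lam).const_sub lam
  have hmaps : MapsTo (fun z => lam - lam * z) (Iio 1) (Ici 0) := fun z hz =>
    sub_nonneg.2 (mul_le_of_le_one_right hlam (le_of_lt hz))
  have hlapl := (hasDerivWithinAt_lapl_zero hR hiR).comp_of_eq 1 harg hmaps (by simp)
  have hformula (z : ℝ) : arrivalExponent lam beta R z =
      lam - lam * z + beta - beta * lapl R (lam - lam * z) := by
    rw [arrivalExponent]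
    ring
  exact (((harg.add_const beta).sub (hlapl.const_mul beta)).congr_deriv (by ring)).congr
    (fun z _ => hformula z) (hformula 1)

theorem hasDerivWithinAt_arrivalPGF [IsFiniteMeasure S] [IsProbabilityMeasure R]
    (hS : ∀ᵐ x ∂S, 0 ≤ x) (hR : ∀ᵐ x ∂ R, 0 ≤ x) (hiS : Integrable (fun x => x) S)
    (hiR : Integrable (fun x => x) R) (hlam : 0 ≤ lam) (hbeta : 0 ≤ beta) :
    HasDerivWithinAt (arrivalPGF lam beta S R)
      ((lam * ∫ x, x ∂S) * (1 + beta * ∫ x, x ∂ R)) (Iio 1) 1 := by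
  have hmaps : MapsTo (arrivalExponent lam beta R) (Iio 1) (Ici 0) := fun z hz =>
    arrivalExponent_nonneg hR hlam hbeta (le_of_lt hz)
  exact ((hasDerivWithinAt_lapl_zero hS hiS).comp_of_eq 1
    (hasDerivWithinAt_arrivalExponent hR hiR hlam) hmaps arrivalExponent_one.symm).congr_deriv
    (by ring)

theorem tendsto_one_sub_arrivalPGF_div_arrivalExponent [IsProbabilityMeasure S]
    [IsProbabilityMeasure R] (hS : ∀ᵐ x ∂S, 0 ≤ x) (hR : ∀ᵐ x ∂ R, 0 ≤ x)
    (hiS : Integrable (fun x => x) S) (hiR : Integrable (fun x => x) R) (hlam : 0 < lam)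
    (hbeta : 0 ≤ beta) :
    Tendsto (fun z => (1 - arrivalPGF lam beta S R z) / arrivalExponent lam beta R z) (𝓝[<] 1)
      (𝓝 (∫ x, x ∂S)) := by
  have hmean : 0 ≤ ∫ x, x ∂ R := integral_nonneg_of_ae hR
  have hne : -(lam * (1 + beta * ∫ x, x ∂ R)) ≠ 0 := neg_ne_zero.2 (by positivity)
  have hlim := tendsto_div_of_hasDerivWithinAt_of_eq_zero
    ((hasDerivWithinAt_arrivalPGF hS hR hiS hiR hlam.le hbeta).const_sub 1)
    (hasDerivWithinAt_arrivalExponent hR hiR hlam.le) (by rw [arrivalPGF_one, sub_self])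
    arrivalExponent_one hne self_notMem_Iio
  convert hlim using 2
  rw [eq_div_iff hne]
  ring

end Arrivals

section GeneratingFunctions

variable {lam alpha d₁ d₂ : ℝ} {δ₁ δ₂ : ℝ → ℝ}

theorem tendsto_exp_neg_integral_retrial {nu : ℝ} (hδ₁ : HasDerivWithinAt δ₁ d₁ (Iio 1) 1)
    (hδ₂ : HasDerivWithinAt δ₂ d₂ (Iio 1) 1) (hδ₁_one : δ₁ 1 = 1) (hδ₂_one : δ₂ 1 = 1)
    (hd₁ : d₁ ≠ 1) (hnu : nu ≠ 0) :
    Tendsto (fun z => Real.exp (-∫ u in z..1,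
        (lam * (1 - δ₁ u) + alpha * (1 - δ₂ u)) / (nu * (δ₁ u - u)))) (𝓝[<] 1) (𝓝 1) := by
  have hintegrand := tendsto_div_of_hasDerivWithinAt_of_eq_zero
    (((hδ₁.const_sub 1).const_mul lam).add ((hδ₂.const_sub 1).const_mul alpha))
    ((hδ₁.sub (hasDerivWithinAt_id 1 (Iio 1))).const_mul nu)
    (by simp [hδ₁_one, hδ₂_one]) (by simp [hδ₁_one])
    (mul_ne_zero hnu (sub_ne_zero.2 hd₁)) self_notMem_Iio
  have hintegral := tendsto_intervalIntegral_nhdsLT_zero hintegrand.norm.isBoundedUnder_le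
  simpa using hintegral.neg.rexp

theorem tendsto_idle_add_incoming_add_outgoing {h₁ h₂ P₀ : ℝ → ℝ} {m₁ m₂ p : ℝ}
    (hδ₁ : HasDerivWithinAt δ₁ d₁ (Iio 1) 1) (hδ₂ : HasDerivWithinAt δ₂ d₂ (Iio 1) 1)
    (hδ₁_one : δ₁ 1 = 1) (hδ₂_one : δ₂ 1 = 1) (hd₁ : d₁ ≠ 1)
    (hm₁ : Tendsto (fun z => (1 - δ₁ z) / h₁ z) (𝓝[<] 1) (𝓝 m₁))
    (hm₂ : Tendsto (fun z => (1 - δ₂ z) / h₂ z) (𝓝[<] 1) (𝓝 m₂))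
    (hP₀ : Tendsto P₀ (𝓝[<] 1) (𝓝 p)) :
    Tendsto (fun z => P₀ z +
        (lam * (1 - z) + alpha * (1 - δ₂ z)) * (1 - δ₁ z) / ((δ₁ z - z) * h₁ z) * P₀ z +
        alpha * (1 - δ₂ z) / h₂ z * P₀ z) (𝓝[<] 1)
      (𝓝 (p + (lam + alpha * d₂) / (1 - d₁) * m₁ * p + alpha * m₂ * p)) := by
  have hid := hasDerivWithinAt_id (1 : ℝ) (Iio 1)
  have hratio := tendsto_div_of_hasDerivWithinAt_of_eq_zero
    (((hid.const_sub 1).const_mul lam).add ((hδ₂.const_sub 1).const_mul alpha)) (hδ₁.sub hid)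
    (by simp [hδ₂_one]) (by simp [hδ₁_one]) (sub_ne_zero.2 hd₁) self_notMem_Iio
  have hvalue : (lam * -1 + alpha * -d₂) / (d₁ - 1) = (lam + alpha * d₂) / (1 - d₁) := by
    rw [← neg_div_neg_eq]
    ring
  rw [hvalue] at hratio
  refine ((hP₀.add ((hratio.mul hm₁).mul hP₀)).add ((hm₂.const_mul alpha).mul hP₀)).congr ?_
  intro z
  simp only [Pi.add_apply, Pi.sub_apply, id_eq, div_mul_div_comm, mul_div_assoc]

end GeneratingFunctions

theorem server_availability_general
    {lam alpha nu beta1 beta2 : ℝ}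
    (hlam : 0 < lam) (hnu : nu ≠ 0)
    (hbeta1 : 0 ≤ beta1) (hbeta2 : 0 ≤ beta2)
    {S1 R1 S2 R2 : Measure ℝ}
    [IsProbabilityMeasure S1] [IsProbabilityMeasure R1]
    [IsProbabilityMeasure S2] [IsProbabilityMeasure R2]
    (hS1 : S1 (Iio 0) = 0) (hR1 : R1 (Iio 0) = 0)
    (hS2 : S2 (Iio 0) = 0) (hR2 : R2 (Iio 0) = 0)
    (hiS1 : Integrable (fun x => x) S1) (hiR1 : Integrable (fun x => x) R1)
    (hiS2 : Integrable (fun x => x) S2) (hiR2 : Integrable (fun x => x) R2)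
    {mu11 gamma11 mu21 gamma21 : ℝ}
    (hmu11 : mu11 = ∫ x, x ∂S1) (hgamma11 : gamma11 = ∫ x, x ∂ R1)
    (hmu21 : mu21 = ∫ x, x ∂S2) (hgamma21 : gamma21 = ∫ x, x ∂ R2)
    {rho sigma : ℝ} (hrho : rho = lam * mu11) (hsigma : sigma = alpha * mu21)
    {h1 h2 δ1 δ2 g φ : ℝ → ℝ}
    (hh1 : ∀ z, h1 z = lam + beta1 - lam * z - beta1 * lapl R1 (lam - lam * z))
    (hh2 : ∀ z, h2 z = lam + beta2 - lam * z - beta2 * lapl R2 (lam - lam * z))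
    (hδ1 : ∀ z, δ1 z = lapl S1 (h1 z)) (hδ2 : ∀ z, δ2 z = lapl S2 (h2 z))
    (hg : ∀ u, g u = (lam * (1 - δ1 u) + alpha * (1 - δ2 u)) / (nu * (δ1 u - u)))
    (hφ : ∀ z, φ z = Real.exp (-(∫ u in z..1, g u)))
    {P0 : ℝ → ℝ}
    (hP0 : ∀ z, P0 z = ((1 - rho * (1 + beta1 * gamma11)) /
      (1 + sigma * (1 + beta2 * gamma21))) * φ z)
    {P1 P2 : ℝ → ℝ}
    (hP1 : ∀ z, P1 z = (lam * (1 - z) + alpha * (1 - δ2 z)) * (1 - δ1 z) /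
      ((δ1 z - z) * h1 z) * P0 z)
    (hP2 : ∀ z, P2 z = alpha * (1 - δ2 z) / h2 z * P0 z)
    (hload : rho * (1 + beta1 * gamma11) ≠ 1)
    (hD : 1 + sigma * (1 + beta2 * gamma21) ≠ 0) :
    Tendsto (fun z : ℝ => P0 z + P1 z + P2 z) (𝓝[<] 1)
      (𝓝 (((1 + sigma) * (1 - rho * (1 + beta1 * gamma11)) +
        rho * (1 + sigma * (1 + beta2 * gamma21))) /
        (1 + sigma * (1 + beta2 * gamma21)))) := by
  obtain rfl : h1 = arrivalExponent lam beta1 R1 := funext hh1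
  obtain rfl : h2 = arrivalExponent lam beta2 R2 := funext hh2
  obtain rfl : δ1 = arrivalPGF lam beta1 S1 R1 := funext hδ1
  obtain rfl : δ2 = arrivalPGF lam beta2 S2 R2 := funext hδ2
  subst hmu11 hgamma11 hmu21 hgamma21 hrho hsigma
  replace hS1 := ae_nonneg_of_measure_Iio_eq_zero hS1
  replace hR1 := ae_nonneg_of_measure_Iio_eq_zero hR1
  replace hS2 := ae_nonneg_of_measure_Iio_eq_zero hS2
  replace hR2 := ae_nonneg_of_measure_Iio_eq_zero hR2
  have hδ1_deriv := hasDerivWithinAt_arrivalPGF hS1 hR1 hiS1 hiR1 hlam.le hbeta1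
  have hδ2_deriv := hasDerivWithinAt_arrivalPGF hS2 hR2 hiS2 hiR2 hlam.le hbeta2
  have hφ_lim : Tendsto φ (𝓝[<] 1) (𝓝 1) := by
    rw [funext hφ, funext hg]
    exact tendsto_exp_neg_integral_retrial hδ1_deriv hδ2_deriv arrivalPGF_one arrivalPGF_one
      hload hnu
  have hP0_lim := (hφ_lim.const_mul _).congr fun z => (hP0 z).symm
  simp only [hP1, hP2]
  convert tendsto_idle_add_incoming_add_outgoing hδ1_deriv hδ2_deriv arrivalPGF_one arrivalPGF_one
    hload (tendsto_one_sub_arrivalPGF_div_arrivalExponent hS1 hR1 hiS1 hiR1 hlam hbeta1)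
    (tendsto_one_sub_arrivalPGF_div_arrivalExponent hS2 hR2 hiS2 hiR2 hlam hbeta2) hP0_lim using 2
  have hload_sub := sub_ne_zero.2 hload.symm
  field_simp
  ring

/-- steady-state server availability
`P_a = lim_{z→1⁻} (P₀(z) + P̃₁(z) + P̃₂(z))
     = [(1 + σ)(1 − ρ(1 + β₁γ_{1,1})) + ρ(1 + σ(1 + β₂γ_{2,1}))] / (1 + σ(1 + β₂γ_{2,1}))`. -/
theorem server_availability
    (lam alpha nu beta1 beta2 : ℝ)
    (hlam : 0 < lam) (halpha : 0 < alpha) (hnu : 0 < nu)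
    (hbeta1 : 0 ≤ beta1) (hbeta2 : 0 ≤ beta2)
    (S1 R1 S2 R2 : Measure ℝ)
    [IsProbabilityMeasure S1] [IsProbabilityMeasure R1]
    [IsProbabilityMeasure S2] [IsProbabilityMeasure R2]
    (hS1 : S1 (Set.Iio 0) = 0) (hR1 : R1 (Set.Iio 0) = 0)
    (hS2 : S2 (Set.Iio 0) = 0) (hR2 : R2 (Set.Iio 0) = 0)
    (hiS1 : Integrable (fun x => x) S1) (hiR1 : Integrable (fun x => x) R1)
    (hiS2 : Integrable (fun x => x) S2) (hiR2 : Integrable (fun x => x) R2)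
    (mu11 gamma11 mu21 gamma21 : ℝ)
    (hmu11 : mu11 = ∫ x, x ∂S1) (hgamma11 : gamma11 = ∫ x, x ∂ R1)
    (hmu21 : mu21 = ∫ x, x ∂S2) (hgamma21 : gamma21 = ∫ x, x ∂ R2)
    (rho sigma : ℝ) (hrho : rho = lam * mu11) (hsigma : sigma = alpha * mu21)
    (h1 h2 δ1 δ2 g φ : ℝ → ℝ)
    (hh1 : ∀ z, h1 z = lam + beta1 - lam * z - beta1 * lapl R1 (lam - lam * z))
    (hh2 : ∀ z, h2 z = lam + beta2 - lam * z - beta2 * lapl R2 (lam - lam * z))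
    (hδ1 : ∀ z, δ1 z = lapl S1 (h1 z)) (hδ2 : ∀ z, δ2 z = lapl S2 (h2 z))
    (hg : ∀ u, g u = (lam * (1 - δ1 u) + alpha * (1 - δ2 u)) / (nu * (δ1 u - u)))
    (hφ : ∀ z, φ z = Real.exp (-(∫ u in z..1, g u)))
    (P0 : ℝ → ℝ)
    (hP0 : ∀ z, P0 z = ((1 - rho * (1 + beta1 * gamma11)) /
      (1 + sigma * (1 + beta2 * gamma21))) * φ z)
    (P1 P2 : ℝ → ℝ)
    (hP1 : ∀ z, P1 z = (lam * (1 - z) + alpha * (1 - δ2 z)) * (1 - δ1 z) /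
      ((δ1 z - z) * h1 z) * P0 z)
    (hP2 : ∀ z, P2 z = alpha * (1 - δ2 z) / h2 z * P0 z)
    (hstab : rho * (1 + beta1 * gamma11) < 1) :
    Filter.Tendsto (fun z : ℝ => P0 z + P1 z + P2 z) (nhdsWithin 1 (Set.Iio 1))
      (nhds (((1 + sigma) * (1 - rho * (1 + beta1 * gamma11)) +
        rho * (1 + sigma * (1 + beta2 * gamma21))) /
        (1 + sigma * (1 + beta2 * gamma21)))) := by
  have hmu21_nonneg : 0 ≤ mu21 := hmu21 ▸ integral_id_nonneg_of_measure_Iio_eq_zero hS2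
  have hgamma21_nonneg : 0 ≤ gamma21 := hgamma21 ▸ integral_id_nonneg_of_measure_Iio_eq_zero hR2
  exact server_availability_general hlam hnu.ne' hbeta1 hbeta2 hS1 hR1 hS2 hR2 hiS1 hiR1 hiS2 hiR2
    hmu11 hgamma11 hmu21 hgamma21 hrho hsigma hh1 hh2 hδ1 hδ2 hg hφ hP0 hP1 hP2 hstab.ne
    (by rw [hsigma]; positivity)
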